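/- The subspace U = {(0,0,0,d,e,f) : d,e,f ∈ F_2} of W'^* is a G-submodule under the action D, and the short exact sequence of G-modules 0 → U → W'^* → W'^*/U → 0 does not split: U has no G-invariant complement in W'^*. -/

import Mathlib

set_option synthInstance.maxHeartbeats 1000000
set_option maxHeartbeats 1000000

open MvPolynomial

/-- The field with two elements. -/
abbrev F2 := ZMod 2

/-- `G = GL₃(𝔽₂)`. -/
abbrev G3 := GL (Fin 3) F2

/-- The generator `A` of `G`. -/
def Agen : G3 := ⟨!![1,0,1; 0,1,0; 0,0,1], !![1,0,1; 0,1,0; 0,0,1], by decide, by decide⟩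

/-- The generator `B` of `G`. -/
def Bgen : G3 := ⟨!![0,0,1; 1,0,0; 0,1,0], !![0,1,0; 0,0,1; 1,0,0], by decide, by decide⟩

/-- The matrix `D(A)` of the action on `W'^* = 𝔽₂⁶`. -/
def DA6 : Matrix (Fin 6) (Fin 6) F2 :=
  !![1,0,1,0,0,1; 0,1,0,0,0,0; 0,0,1,0,0,0; 0,0,0,1,1,0; 0,0,0,0,1,0; 0,0,0,0,0,1]

/-- The matrix `D(B)` of the action on `W'^* = 𝔽₂⁶`. -/
def DB6 : Matrix (Fin 6) (Fin 6) F2 :=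
  !![0,0,1,0,0,0; 1,0,0,0,0,0; 0,1,0,0,0,0; 0,0,0,0,0,1; 0,0,0,1,0,0; 0,0,0,0,1,0]

/-- The algebra endomorphism of `S[W'^*] = 𝔽₂[a,b,c,d,e,f]` induced by the right action of
`σ` on the linear forms (coefficient row vectors are multiplied on the right by `D σ`; in
particular the variable `Xᵢ` is sent to the linear form given by the `i`-th row of `D σ`). -/
noncomputable def polyAct (D : G3 →* GL (Fin 6) F2) (σ : G3) :
    MvPolynomial (Fin 6) F2 →ₐ[F2] MvPolynomial (Fin 6) F2 :=
  aeval (fun i => ∑ j, (D σ : Matrix (Fin 6) (Fin 6) F2) i j • X j)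

/-- The invariant ring `S[W'^*]^H` for a subgroup `H ≤ G`. -/
noncomputable def invH (D : G3 →* GL (Fin 6) F2) (H : Subgroup G3) :
    Subalgebra F2 (MvPolynomial (Fin 6) F2) where
  carrier := {p | ∀ σ ∈ H, polyAct D σ p = p}
  mul_mem' := fun ha hb σ hσ => by rw [map_mul, ha σ hσ, hb σ hσ]
  add_mem' := fun ha hb σ hσ => by rw [map_add, ha σ hσ, hb σ hσ]
  one_mem' := fun σ _ => map_one _
  zero_mem' := fun σ _ => map_zero _
  algebraMap_mem' := fun r σ _ => AlgHom.commutes _ r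

/-- The invariant ring `S[W'^*]^G`. -/
noncomputable def invG (D : G3 →* GL (Fin 6) F2) :
    Subalgebra F2 (MvPolynomial (Fin 6) F2) :=
  invH D ⊤

/-- The subspace `U = {(0,0,0,d,e,f)} ⊆ W'^* = 𝔽₂⁶`. -/
def Usub : Submodule F2 (Fin 6 → F2) where
  carrier := {w | w 0 = 0 ∧ w 1 = 0 ∧ w 2 = 0}
  add_mem' := by
    intro a b ha hb
    obtain ⟨h1, h2, h3⟩ := ha
    obtain ⟨h4, h5, h6⟩ := hb
    refine ⟨?_, ?_, ?_⟩ <;>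
      simp only [Pi.add_apply, h1, h2, h3, h4, h5, h6, add_zero]
  zero_mem' := ⟨rfl, rfl, rfl⟩
  smul_mem' := by
    intro c a ha
    obtain ⟨h1, h2, h3⟩ := ha
    refine ⟨?_, ?_, ?_⟩ <;>
      simp only [Pi.smul_apply, h1, h2, h3, smul_eq_mul, mul_zero]

/-!
Stability of `U` only has to be checked on `A` and `B`, since they generate `G`: the conjugates of
the transvection `A` by the cyclic permutation matrix `B` are three elementary transvections, their
commutators are the other three, and over `𝔽₂` transvections generate the general linear group.

A complement of `U` contains a vector `v = (1,0,0,x,y,z)`. If it is stable under `A` and `B`, it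
also contains `vA - v - vB = (0,0,0,-y,x-z,1-x)` and `vB²A - vB² = (0,0,0,0,z,0)`. Both lie in `U`,
hence vanish, which gives `x = z = 1` and `z = 0`.
-/

section Transvections

open Matrix Matrix.SpecialLinearGroup
open scoped commutatorElement

variable {n R : Type*} [Fintype n] [DecidableEq n] [CommRing R]

theorem commutatorElement_transvection {i j k : n} (hij : i ≠ j) (hjk : j ≠ k) (hik : i ≠ k)
    (a b : R) :
    ⁅SpecialLinearGroup.transvection hij a, SpecialLinearGroup.transvection hjk b⁆ =
      SpecialLinearGroup.transvection hik (a * b) := by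
  rw [commutatorElement_def, mul_inv_eq_iff_eq_mul, mul_inv_eq_iff_eq_mul]
  ext1
  simp only [Matrix.SpecialLinearGroup.coe_mul, transvection_coe, mul_add, mul_one, add_mul,
    one_mul, single_mul_single_same, Matrix.add_apply, ne_eq, hjk.symm, not_false_eq_true,
    single_mul_single_of_ne, add_zero, hik.symm]
  abel

theorem permMatrix_mul_transvection (σ : Equiv.Perm n) (i j : n) (c : R) :
    σ.permMatrix R * Matrix.transvection i j c =
      Matrix.transvection (σ.symm i) (σ.symm j) c * σ.permMatrix R := by
  rw [PEquiv.toMatrix_toPEquiv_mul, PEquiv.mul_toMatrix_toPEquiv, Matrix.transvection,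
    Matrix.transvection]
  ext a b
  simp [Matrix.one_apply, Matrix.single_apply, Equiv.eq_symm_apply, Equiv.symm_apply_eq]

theorem diagonal_zmod_two_eq_one_of_det_ne_zero {d : n → ZMod 2} (hd : (diagonal d).det ≠ 0) :
    diagonal d = 1 := by
  rw [det_diagonal, Finset.prod_ne_zero_iff] at hd
  exact diagonal_eq_one.2 <| funext fun i => Fin.eq_one_of_ne_zero (d i) (hd i (Finset.mem_univ i))

theorem eq_top_of_transvection_zmod_two_mem (H : Subgroup (GL n (ZMod 2)))
    (hH : ∀ (i j : n) (hij : i ≠ j), toGL (SpecialLinearGroup.transvection hij 1) ∈ H) :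
    H = ⊤ := by
  rw [Subgroup.eq_top_iff']
  intro g
  refine diagonal_transvection_induction_of_det_ne_zero
    (fun M => ∀ g : GL n (ZMod 2), (g : Matrix n n (ZMod 2)) = M → g ∈ H) g
    (Matrix.GeneralLinearGroup.det_ne_zero g) ?diagonal ?transvection ?mul g rfl
  case diagonal =>
    intro d hd g hg
    obtain rfl : g = 1 := Units.ext (hg.trans (diagonal_zmod_two_eq_one_of_det_ne_zero hd))
    exact H.one_mem
  case transvection =>
    rintro ⟨i, j, hij, c⟩ g hg
    rcases eq_or_ne c 0 with rfl | hc
    · obtain rfl : g = 1 := Units.ext (hg.trans (transvection_zero i j))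
      exact H.one_mem
    · obtain rfl := Fin.eq_one_of_ne_zero c hc
      obtain rfl : g = toGL (SpecialLinearGroup.transvection hij 1) := Units.ext hg
      exact hH i j hij
  case mul =>
    intro M N hM hN ihM ihN g hg
    obtain rfl : g = GeneralLinearGroup.mkOfDetNeZero M hM *
        GeneralLinearGroup.mkOfDetNeZero N hN := Units.ext hg
    exact H.mul_mem (ihM _ rfl) (ihN _ rfl)

end Transvections

section Generation

open Matrix Matrix.SpecialLinearGroup
open scoped commutatorElement

theorem Agen_eq_transvection :
    Agen = toGL (SpecialLinearGroup.transvection (show (0 : Fin 3) ≠ 2 by decide) 1) :=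
  Units.ext (by decide)

theorem coe_Bgen : (Bgen : Matrix (Fin 3) (Fin 3) F2) =
    Equiv.Perm.permMatrix F2 (Equiv.subRight 1) := by
  decide

theorem Bgen_conj_transvection {i j : Fin 3} (hij : i ≠ j) (c : F2) :
    Bgen * toGL (SpecialLinearGroup.transvection hij c) * Bgen⁻¹ =
      toGL (SpecialLinearGroup.transvection ((add_left_injective 1).ne hij) c) := by
  rw [mul_inv_eq_iff_eq_mul]
  ext1
  rw [Units.val_mul, Units.val_mul, coe_Bgen]
  exact permMatrix_mul_transvection (Equiv.subRight 1) i j c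

theorem closure_Agen_Bgen : Subgroup.closure {Agen, Bgen} = ⊤ := by
  set H := Subgroup.closure {Agen, Bgen}
  have hAH : Agen ∈ H := Subgroup.subset_closure (by simp)
  have hBH : Bgen ∈ H := Subgroup.subset_closure (by simp)
  have rotate {i j : Fin 3} (hij : i ≠ j)
      (h : toGL (SpecialLinearGroup.transvection hij (1 : F2)) ∈ H) :
      toGL (SpecialLinearGroup.transvection ((add_left_injective 1).ne hij) (1 : F2)) ∈ H := by
    rw [← Bgen_conj_transvection hij]
    exact H.mul_mem (H.mul_mem hBH h) (H.inv_mem hBH)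
  have mem_add_two (i : Fin 3) (hi : i ≠ i + 2) :
      toGL (SpecialLinearGroup.transvection hi (1 : F2)) ∈ H := by
    rw [Agen_eq_transvection] at hAH
    fin_cases i
    exacts [hAH, rotate _ hAH, rotate _ (rotate _ hAH)]
  have mem_add_two_add_two (i : Fin 3) (hi : i ≠ i + 2 + 2) :
      toGL (SpecialLinearGroup.transvection hi (1 : F2)) ∈ H := by
    have hi₁ : i ≠ i + 2 := by lia
    have hi₂ : i + 2 ≠ i + 2 + 2 := by lia
    rw [← one_mul (1 : F2), ← commutatorElement_transvection hi₁ hi₂ hi, map_commutatorElement]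
    exact Subgroup.commutator_le_self H <|
      Subgroup.commutator_mem_commutator (mem_add_two i hi₁) (mem_add_two (i + 2) hi₂)
  refine eq_top_of_transvection_zmod_two_mem H fun i j hij => ?_
  obtain rfl | rfl : j = i + 2 ∨ j = i + 2 + 2 := by lia
  exacts [mem_add_two i hij, mem_add_two_add_two i hij]

theorem submonoidClosure_Agen_Bgen : Submonoid.closure {Agen, Bgen} = ⊤ := by
  rw [← Subgroup.closure_toSubmonoid_of_finite, closure_Agen_Bgen, Subgroup.top_toSubmonoid]

end Generation

section Stability

open Matrix

theorem vecMul_mem_of_closure_eq_top {M n R : Type*} [Monoid M] [Fintype n] [DecidableEq n]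
    [Semiring R] (D : M →* Matrix n n R) {S : Set M} (hS : Submonoid.closure S = ⊤)
    {U : Set (n → R)} (hU : ∀ g ∈ S, ∀ w ∈ U, w ᵥ* D g ∈ U) (g : M) :
    ∀ w ∈ U, w ᵥ* D g ∈ U := by
  induction g using Submonoid.dense_induction S hS with
  | mem g hg => exact hU g hg
  | one => simp
  | mul g h ihg ihh =>
    intro w hw
    rw [map_mul, ← vecMul_vecMul]
    exact ihh _ (ihg w hw)

theorem mem_Usub {w : Fin 6 → F2} : w ∈ Usub ↔ w 0 = 0 ∧ w 1 = 0 ∧ w 2 = 0 := Iff.rfl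

theorem vecMul_DA6 (w : Fin 6 → F2) :
    w ᵥ* DA6 = ![w 0, w 1, w 0 + w 2, w 3, w 3 + w 4, w 0 + w 5] := by
  ext i
  fin_cases i <;> simp [DA6, vecMul, dotProduct, Fin.sum_univ_succ]

theorem vecMul_DB6 (w : Fin 6 → F2) : w ᵥ* DB6 = ![w 1, w 2, w 0, w 4, w 5, w 3] := by
  ext i
  fin_cases i <;> simp [DB6, vecMul, dotProduct, Fin.sum_univ_succ]

theorem vecMul_DA6_mem_Usub {w : Fin 6 → F2} (hw : w ∈ Usub) : w ᵥ* DA6 ∈ Usub := by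
  obtain ⟨h0, h1, h2⟩ := mem_Usub.1 hw
  simp [mem_Usub, vecMul_DA6, h0, h1, h2]

theorem vecMul_DB6_mem_Usub {w : Fin 6 → F2} (hw : w ∈ Usub) : w ᵥ* DB6 ∈ Usub := by
  obtain ⟨h0, h1, h2⟩ := mem_Usub.1 hw
  simp [mem_Usub, vecMul_DB6, h0, h1, h2]

end Stability

section NoComplement

open Matrix

variable {C : Submodule F2 (Fin 6 → F2)}

theorem exists_lift_mem_of_codisjoint (hC : Codisjoint Usub C) (a b c : F2) :
    ∃ x y z, ![a, b, c, x, y, z] ∈ C := by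
  obtain ⟨u, v, hu, hv, huv⟩ :=
    Submodule.codisjoint_iff_exists_add_eq.1 hC ![a, b, c, 0, 0, 0]
  obtain ⟨hu0, hu1, hu2⟩ := mem_Usub.1 hu
  refine ⟨v 3, v 4, v 5, ?_⟩
  convert hv using 1
  ext i
  have huvi := congrFun huv i
  fin_cases i <;> simp_all

theorem not_isCompl_Usub_of_vecMul_mem (hA : ∀ w ∈ C, w ᵥ* DA6 ∈ C)
    (hB : ∀ w ∈ C, w ᵥ* DB6 ∈ C) : ¬ IsCompl Usub C := by
  intro hC
  obtain ⟨x, y, z, hv⟩ := exists_lift_mem_of_codisjoint hC.codisjoint 1 0 0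
  have eq_zero {w : Fin 6 → F2} (hwU : w ∈ Usub) (hwC : w ∈ C) : w = 0 :=
    Submodule.disjoint_def.1 hC.disjoint w hwU hwC
  set v : Fin 6 → F2 := ![1, 0, 0, x, y, z]
  have hvB : v ᵥ* DB6 ∈ C := hB v hv
  have hvBB : v ᵥ* DB6 ᵥ* DB6 ∈ C := hB _ hvB
  have vA_sub : v ᵥ* DA6 - v - v ᵥ* DB6 = ![0, 0, 0, -y, x - z, 1 - x] := by
    simp [v, vecMul_DA6, vecMul_DB6]
  have vBBA_sub : v ᵥ* DB6 ᵥ* DB6 ᵥ* DA6 - v ᵥ* DB6 ᵥ* DB6 = ![0, 0, 0, 0, z, 0] := by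
    ext i
    fin_cases i <;> simp [v, vecMul_DA6, vecMul_DB6]
  have h_zero₁ : ![0, 0, 0, -y, x - z, 1 - x] = 0 :=
    eq_zero (by simp [mem_Usub]) (vA_sub ▸ C.sub_mem (C.sub_mem (hA v hv) hv) hvB)
  have h_zero₂ : ![0, 0, 0, 0, z, 0] = 0 :=
    eq_zero (by simp [mem_Usub]) (vBBA_sub ▸ C.sub_mem (hA _ hvBB) hvBB)
  have hxz : x - z = 0 := congrFun h_zero₁ 4
  have hx : 1 - x = 0 := congrFun h_zero₁ 5
  have hz : z = 0 := congrFun h_zero₂ 4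
  exact one_ne_zero (by linear_combination hx + hxz + hz : (1 : F2) = 0)

end NoComplement

/-- The subspace `U = {(0,0,0,d,e,f)}` of `W'^*` is a `G`-submodule
under the action `D`, and the short exact sequence of `G`-modules
`0 → U → W'^* → W'^*/U → 0` does not split: `U` has no `G`-invariant complement in
`W'^*`. -/
theorem stmt18 (D : G3 →* GL (Fin 6) F2)
    (hA : (D Agen : Matrix (Fin 6) (Fin 6) F2) = DA6)
    (hB : (D Bgen : Matrix (Fin 6) (Fin 6) F2) = DB6) :
    -- `U` is a `G`-submodule …
    (∀ σ : G3, ∀ w ∈ Usub, Matrix.vecMul w (D σ : Matrix (Fin 6) (Fin 6) F2) ∈ Usub) ∧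
    -- … without any `G`-invariant complement:
    ¬ ∃ C : Submodule F2 (Fin 6 → F2),
        (∀ σ : G3, ∀ w ∈ C, Matrix.vecMul w (D σ : Matrix (Fin 6) (Fin 6) F2) ∈ C) ∧
        IsCompl Usub C := by
  constructor
  · refine vecMul_mem_of_closure_eq_top ((Units.coeHom _).comp D) submonoidClosure_Agen_Bgen ?_
    rintro g (rfl | rfl) w hw
    · simpa [hA] using vecMul_DA6_mem_Usub hw
    · simpa [hB] using vecMul_DB6_mem_Usub hw
  · rintro ⟨C, hC, hUC⟩
    exact not_isCompl_Usub_of_vecMul_mem (fun w hw => hA ▸ hC Agen w hw)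
      (fun w hw => hB ▸ hC Bgen w hw) hUC
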